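/- Let X be a proper geodesic metric space and p ∈ X. If 0 < inj(p) < conj(X), then inj(p) = MinRad(p). -/

import Mathlib

open Set Metric Topology Filter
open scoped ENNReal

noncomputable section

namespace InjSoul

/-- The unit interval `[0,1] ⊆ ℝ`. -/
abbrev I01 : Set ℝ := Set.Icc (0 : ℝ) 1

variable {X : Type*} [MetricSpace X]

/-- `0` as a point of `[0,1]`. -/
def pt0 : I01 := ⟨0, by norm_num⟩

/-- `1` as a point of `[0,1]`. -/
def pt1 : I01 := ⟨1, by norm_num⟩

/-- `c : [0,1] → X` is a geodesic of speed (= length) `L`. -/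
def IsGeod (c : C(I01, X)) (L : ℝ) : Prop :=
  0 ≤ L ∧ ∀ s t : I01, dist (c s) (c t) = L * |(s : ℝ) - (t : ℝ)|

/-- `γ : [0,1] → X` is a local geodesic of speed (= length) `L`. -/
def IsLocGeod (γ : C(I01, X)) (L : ℝ) : Prop :=
  0 ≤ L ∧ ∀ t : I01, ∃ ε > 0, ∀ s s' : I01,
    |(s : ℝ) - (t : ℝ)| < ε → |(s' : ℝ) - (t : ℝ)| < ε →
      dist (γ s) (γ s') = L * |(s : ℝ) - (s' : ℝ)|

/-- `X` is a geodesic space: any two points are joined by a geodesic. -/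
def GeodesicSpace (X : Type*) [MetricSpace X] : Prop :=
  ∀ x y : X, ∃ (c : C(I01, X)) (L : ℝ), IsGeod c L ∧ c pt0 = x ∧ c pt1 = y

/-- The cut locus of `p`: all points joined to `p` by at least two distinct geodesics. -/
def Cut (p : X) : Set X :=
  {q | ∃ (γ σ : C(I01, X)) (Lγ Lσ : ℝ), IsGeod γ Lγ ∧ IsGeod σ Lσ ∧
    γ pt0 = p ∧ γ pt1 = q ∧ σ pt0 = p ∧ σ pt1 = q ∧ γ ≠ σ}

/-- The injectivity radius of `p`, an element of `[0,∞]` (`∞` if `Cut p = ∅`). -/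
def inj (p : X) : ℝ≥0∞ := ⨅ q ∈ Cut p, edist p q

/-- The minimal cut locus of `p`: points `γ t₀`, `t₀ ∈ (0,1)`, on a nontrivial local geodesic
`γ` issuing in `p` such that `γ` is minimizing on `[0,t₀]` but on no larger interval `[0,t]`. -/
def MinCut (p : X) : Set X :=
  {q | ∃ (γ : C(I01, X)) (L : ℝ) (t₀ : ℝ) (ht₀ : t₀ ∈ Set.Ioo (0 : ℝ) 1),
      IsLocGeod γ L ∧ 0 < L ∧ γ pt0 = p ∧ γ ⟨t₀, Set.mem_Icc_of_Ioo ht₀⟩ = q ∧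
      dist p q = L * t₀ ∧
      ∀ t : ℝ, ∀ ht : t ∈ Set.Ioc t₀ 1,
        dist p (γ ⟨t, ⟨(ht₀.1.trans ht.1).le, ht.2⟩⟩) ≠ L * t}

/-- The minimal radius of `p`, an element of `[0,∞]` (`∞` if `MinCut p = ∅`). -/
def minRad (p : X) : ℝ≥0∞ := ⨅ q ∈ MinCut p, edist p q

/-- The space `X̃_p` of local geodesics issuing in `p` (including the constant map), viewed
as a subset of the continuous maps `C([0,1], X)` whose metric is the uniform metric `ρ`. -/
def LocGeodFrom (p : X) : Set C(I01, X) := {γ | (∃ L, IsLocGeod γ L) ∧ γ pt0 = p}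

/-- The endpoint map `exp_p : X̃_p → X`, `γ ↦ γ 1`. -/
def endpt : C(I01, X) → X := fun γ => γ pt1

/-- `γ 1` is conjugate to `p = γ 0` along the local geodesic `γ`: no neighborhood `U` of `γ`
in `X̃_p` is mapped homeomorphically onto its image by the endpoint map. -/
def ConjugateAlong (p : X) (γ : C(I01, X)) : Prop :=
  γ ∈ LocGeodFrom p ∧
    ¬ ∃ U : Set C(I01, X), U ⊆ LocGeodFrom p ∧ U ∈ 𝓝[LocGeodFrom p] γ ∧
      Topology.IsEmbedding (U.restrict endpt)

/-- The conjugate radius of `p`: the infimum of lengths of local geodesics issuing in `p`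
along which the endpoint is conjugate to `p` (`∞` if there are none). -/
def conjRad (p : X) : ℝ≥0∞ :=
  sInf {l | ∃ (γ : C(I01, X)) (L : ℝ), IsLocGeod γ L ∧ γ pt0 = p ∧
    ConjugateAlong p γ ∧ l = ENNReal.ofReal L}

/-- The conjugate radius of the space `X`. -/
def conjSpace (X : Type*) [MetricSpace X] : ℝ≥0∞ := ⨅ p : X, conjRad p


/-! ### Basic facts -/

lemma I01_abs_le (s t : I01) : |(s : ℝ) - (t : ℝ)| ≤ 1 := by
  have h1 := s.2.1; have h2 := s.2.2; have h3 := t.2.1; have h4 := t.2.2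
  rw [abs_le]; constructor <;> linarith

lemma IsGeod.len {c : C(I01, X)} {L : ℝ} (h : IsGeod c L) : L = dist (c pt0) (c pt1) := by
  rw [h.2]; simp [pt0, pt1]

lemma IsGeod.loc {c : C(I01, X)} {L : ℝ} (h : IsGeod c L) : IsLocGeod c L :=
  ⟨h.1, fun _ => ⟨1, one_pos, fun a b _ _ => h.2 a b⟩⟩

/-- The geodesics issuing in `p` of length at most `R`. -/
def Geo (p : X) (R : ℝ) : Set C(I01, X) :=
  {c | c pt0 = p ∧ dist p (c pt1) ≤ R ∧ ∀ s t : I01, dist (c s) (c t) = dist p (c pt1) * |(s : ℝ) - t|}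

lemma Geo.isGeod {p : X} {R : ℝ} {c : C(I01, X)} (h : c ∈ Geo p R) :
    IsGeod c (dist p (c pt1)) := ⟨dist_nonneg, h.2.2⟩

lemma Geo.mem_loc {p : X} {R : ℝ} {c : C(I01, X)} (h : c ∈ Geo p R) : c ∈ LocGeodFrom p :=
  ⟨⟨_, (Geo.isGeod h).loc⟩, h.1⟩

lemma IsGeod.mem_Geo {p : X} {R L : ℝ} {c : C(I01, X)} (h : IsGeod c L) (hp : c pt0 = p)
    (hR : dist p (c pt1) ≤ R) : c ∈ Geo p R := by
  refine ⟨hp, hR, ?_⟩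
  have := h.len
  rw [hp] at this
  rw [← this]; exact h.2

lemma Geo.isCompact [ProperSpace X] (p : X) (R : ℝ) : IsCompact (Geo p R) := by
  have hcl : IsClosed (Geo p R) := by
    have : Geo p R = {c | c pt0 = p} ∩ ({c | dist p (c pt1) ≤ R} ∩
      ⋂ s : I01, ⋂ t : I01, {c | dist (c s) (c t) = dist p (c pt1) * |(s : ℝ) - t|}) := by
      ext c; simp only [Geo, mem_inter_iff, mem_ofPred_eq, mem_iInter]
    rw [this]
    have hev : ∀ s : I01, Continuous fun c : C(I01, X) => c s := fun s => by fun_prop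
    refine (isClosed_eq (hev _) continuous_const).inter
      ((isClosed_le (continuous_const.dist (hev _)) continuous_const).inter ?_)
    refine isClosed_iInter fun s => isClosed_iInter fun t => ?_
    exact isClosed_eq ((hev _).dist (hev _))
      ((continuous_const.dist (hev _)).mul continuous_const)
  let e := ContinuousMap.isometryEquivBoundedOfCompact I01 X
  have hA : IsCompact (e.symm ⁻¹' (Geo p R)) := by
    refine BoundedContinuousFunction.arzela_ascoli₂ (closedBall p R) (isCompact_closedBall p R) _
      (hcl.preimage e.symm.continuous) ?_ ?_
    · intro f x hf
      have h1 : dist (f x) (f pt0) = _ := hf.2.2 x pt0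
      have h2 : f pt0 = p := hf.1
      have h3 := hf.2.1
      rw [h2] at h1
      rw [mem_closedBall, h1]
      calc _ ≤ R * 1 := mul_le_mul h3 (I01_abs_le _ _) (abs_nonneg _) (dist_nonneg.trans h3)
        _ = R := mul_one R
    · refine (LipschitzWith.uniformEquicontinuous (K := R.toNNReal) _ fun f => ?_).equicontinuous
      refine LipschitzWith.of_dist_le_mul fun x y => ?_
      have h1 : dist (f.1 x) (f.1 y) = _ := f.2.2.2 x y
      have h3 := f.2.2.1
      show dist (f.1 x) (f.1 y) ≤ _
      rw [h1, Subtype.dist_eq, Real.dist_eq]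
      exact mul_le_mul_of_nonneg_right (h3.trans (Real.le_coe_toNNReal R)) (abs_nonneg _)
  have := hA.image e.symm.continuous
  rwa [Set.image_preimage_eq _ e.symm.surjective] at this

/-- The restrictions of a path to `[0,t]`, reparametrized on `[0,1]`. -/
def sc (γ : C(I01, X)) : C(I01, C(I01, X)) :=
  ContinuousMap.curry ⟨fun q : I01 × I01 => γ (q.1 * q.2), by fun_prop⟩

lemma sc_apply (γ : C(I01, X)) (t s : I01) : sc γ t s = γ (t * s) := rfl

lemma sc_pt0 (γ : C(I01, X)) (t : I01) : sc γ t pt0 = γ pt0 := by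
  rw [sc_apply]; congr 1; ext; simp [pt0]

lemma sc_pt1 (γ : C(I01, X)) (t : I01) : sc γ t pt1 = γ t := by
  rw [sc_apply]; congr 1; ext; simp [pt1]

lemma sc_one (γ : C(I01, X)) : sc γ pt1 = γ := by
  ext s; rw [sc_apply]; congr 1; ext; simp [pt1]

lemma IsGeod.sc {γ : C(I01, X)} {L : ℝ} (h : IsGeod γ L) (t : I01) :
    IsGeod (sc γ t) (L * t) := by
  refine ⟨mul_nonneg h.1 t.2.1, fun s s' => ?_⟩
  rw [sc_apply, sc_apply, h.2]
  have : ((t * s : I01) : ℝ) - ((t * s' : I01) : ℝ) = t * ((s : ℝ) - s') := by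
    simp [mul_sub]
  rw [this, abs_mul, abs_of_nonneg t.2.1, mul_assoc]

lemma IsLocGeod.sc {γ : C(I01, X)} {L : ℝ} (h : IsLocGeod γ L) (t : I01) :
    IsLocGeod (sc γ t) (L * t) := by
  refine ⟨mul_nonneg h.1 t.2.1, fun u => ?_⟩
  obtain ⟨ε, hε, H⟩ := h.2 (t * u)
  have key : ∀ s s' : I01, ((t * s : I01) : ℝ) - ((t * s' : I01) : ℝ) = t * ((s : ℝ) - s') := by
    intro s s'; simp [mul_sub]
  have key2 : ∀ s : I01, |(s : ℝ) - u| < ε → |((t * s : I01) : ℝ) - ((t * u : I01) : ℝ)| < ε := by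
    intro s hs
    rw [key, abs_mul, abs_of_nonneg t.2.1]
    refine lt_of_le_of_lt ?_ hs
    exact mul_le_of_le_one_left (abs_nonneg _) t.2.2
  refine ⟨ε, hε, fun s s' hs hs' => ?_⟩
  rw [sc_apply, sc_apply, H _ _ (key2 s hs) (key2 s' hs'), key, abs_mul, abs_of_nonneg t.2.1,
    mul_assoc]

lemma IsLocGeod.mem {γ : C(I01, X)} {L : ℝ} {p : X} (h : IsLocGeod γ L) (hp : γ pt0 = p) :
    γ ∈ LocGeodFrom p := ⟨⟨L, h⟩, hp⟩

/-- A local geodesic is globally Lipschitz. -/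
lemma IsLocGeod.lip {γ : C(I01, X)} {L : ℝ} (h : IsLocGeod γ L) (s t : I01) (hst : s ≤ t) :
    dist (γ s) (γ t) ≤ L * ((t : ℝ) - s) := by
  have hcl : IsClosed ({t : I01 | dist (γ s) (γ t) ≤ L * ((t : ℝ) - s)} ∩ Icc s t) := by
    refine IsClosed.inter (isClosed_le ?_ ?_) isClosed_Icc <;> fun_prop
  refine hcl.Icc_subset_of_forall_mem_nhdsWithin (by simp) ?_ ⟨hst, le_rfl⟩
  rintro x ⟨hx, hx2⟩
  obtain ⟨ε, hε, H⟩ := h.2 x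
  have : Metric.ball x ε ∩ Ioi x ∈ 𝓝[>] x :=
    inter_mem (mem_nhdsWithin_of_mem_nhds (ball_mem_nhds _ hε)) self_mem_nhdsWithin
  refine mem_of_superset this ?_
  rintro y ⟨hy, hxy⟩
  have h1 := H x y (by simpa using hε) hy
  have hxy' : (x : ℝ) < y := hxy
  rw [abs_sub_comm, abs_of_pos (by linarith)] at h1
  have := dist_triangle (γ s) (γ x) (γ y)
  simp only [mem_ofPred_eq] at hx ⊢
  nlinarith

/-- A local geodesic whose length is the distance of its endpoints is a geodesic. -/
lemma IsLocGeod.isGeod {γ : C(I01, X)} {L : ℝ} (h : IsLocGeod γ L)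
    (hd : dist (γ pt0) (γ pt1) = L) : IsGeod γ L := by
  have key : ∀ s t : I01, s ≤ t → dist (γ s) (γ t) = L * ((t : ℝ) - s) := by
    intro s t hst
    have h1 := h.lip pt0 s s.2.1
    have h2 := h.lip s t hst
    have h3 := h.lip t pt1 t.2.2
    have h4 := dist_triangle4 (γ pt0) (γ s) (γ t) (γ pt1)
    have e0 : ((pt0 : I01) : ℝ) = 0 := rfl
    have e1 : ((pt1 : I01) : ℝ) = 1 := rfl
    rw [e0] at h1; rw [e1] at h3
    apply le_antisymm h2
    nlinarith
  refine ⟨h.1, fun s t => ?_⟩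
  rcases le_total s t with hst | hst
  · have : (s : ℝ) ≤ t := hst
    rw [key s t hst, abs_sub_comm, abs_of_nonneg (by linarith)]
  · have : (t : ℝ) ≤ s := hst
    rw [dist_comm, key t s hst, abs_of_nonneg (by linarith)]

/-- Speeds of local geodesics are unique. -/
lemma IsLocGeod.unique {γ : C(I01, X)} {L L' : ℝ} (h : IsLocGeod γ L) (h' : IsLocGeod γ L') :
    L = L' := by
  obtain ⟨ε, hε, H⟩ := h.2 pt0
  obtain ⟨ε', hε', H'⟩ := h'.2 pt0
  let δ : ℝ := min (min ε ε') 1 / 2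
  have hm : 0 < min (min ε ε') 1 := by positivity
  have hδ : 0 < δ := by positivity
  have h1 : δ < ε := by
    have : min (min ε ε') 1 ≤ ε := (min_le_left _ _).trans (min_le_left _ _)
    simp only [δ]; linarith
  have h2 : δ < ε' := by
    have : min (min ε ε') 1 ≤ ε' := (min_le_left _ _).trans (min_le_right _ _)
    simp only [δ]; linarith
  have h3 : δ ≤ 1 := by
    have : min (min ε ε') 1 ≤ 1 := min_le_right _ _
    simp only [δ]; linarith
  have e0 : ((pt0 : I01) : ℝ) = 0 := rfl
  have a := H pt0 ⟨δ, hδ.le, h3⟩ (by simpa using hε) (by simp [e0, abs_of_pos hδ, h1])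
  have b := H' pt0 ⟨δ, hδ.le, h3⟩ (by simpa using hε') (by simp [e0, abs_of_pos hδ, h2])
  rw [a] at b
  simp only [e0, zero_sub, abs_neg, abs_of_pos hδ] at b
  exact mul_right_cancel₀ (ne_of_gt hδ) b

/-- Below the conjugate radius, the endpoint map is locally injective. -/
lemma nonconj {p : X} {γ : C(I01, X)} {L : ℝ} (h : IsLocGeod γ L) (hp : γ pt0 = p)
    (hL : ENNReal.ofReal L < conjSpace X) :
    ∃ ε > 0, ∀ a ∈ LocGeodFrom p, ∀ b ∈ LocGeodFrom p, dist a γ < ε → dist b γ < ε →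
      a pt1 = b pt1 → a = b := by
  have hnc : ¬ ConjugateAlong p γ := by
    intro hc
    refine absurd hL (not_lt.mpr ?_)
    exact (iInf_le _ p).trans (sInf_le ⟨γ, L, h, hp, hc, rfl⟩)
  have : ∃ U : Set C(I01, X), U ⊆ LocGeodFrom p ∧ U ∈ 𝓝[LocGeodFrom p] γ ∧
      Topology.IsEmbedding (U.restrict endpt) := by
    by_contra hcon
    exact hnc ⟨h.mem hp, hcon⟩
  obtain ⟨U, -, hU, hemb⟩ := this
  obtain ⟨ε, hε, hsub⟩ := Metric.mem_nhdsWithin_iff.1 hU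
  refine ⟨ε, hε, fun a ha b hb hda hdb hab => ?_⟩
  have hi := Set.injOn_iff_injective.2 hemb.injective
  exact hi (hsub ⟨hda, ha⟩) (hsub ⟨hdb, hb⟩) hab

/-- Inside the injectivity radius geodesics are unique. -/
lemma geo_unique {p : X} {R R' : ℝ} {a b : C(I01, X)} (ha : a ∈ Geo p R) (hb : b ∈ Geo p R')
    (hab : a pt1 = b pt1) (h : edist p (a pt1) < inj p) : a = b := by
  by_contra hne
  refine absurd h (not_lt.mpr ?_)
  exact iInf₂_le (a pt1) ⟨a, b, _, _, Geo.isGeod ha, Geo.isGeod hb, ha.1, rfl, hb.1, hab.symm, hne⟩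

lemma exists_geo (hgeo : GeodesicSpace X) (p q : X) {R : ℝ} (h : dist p q ≤ R) :
    ∃ c ∈ Geo p R, c pt1 = q := by
  obtain ⟨c, L, hc, h0, h1⟩ := hgeo p q
  exact ⟨c, hc.mem_Geo h0 (h1 ▸ h), h1⟩

lemma continuous_ev (s : I01) : Continuous fun c : C(I01, X) => c s := by fun_prop

/-! ### `inj ≤ minRad` -/

lemma inj_le_minRad [ProperSpace X] (hgeo : GeodesicSpace X) (p : X)
    (h1 : inj p < conjSpace X) : inj p ≤ minRad p := by
  refine le_iInf₂ fun q hq => ?_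
  obtain ⟨γ, L, t₀, ht₀, hγ, hL, hp, hγq, hd, hnot⟩ := hq
  by_contra! hlt
  let T : I01 := ⟨t₀, Set.mem_Icc_of_Ioo ht₀⟩
  have hTq : γ T = q := hγq
  have hloc : IsLocGeod (sc γ T) (L * t₀) := hγ.sc T
  have hg : IsGeod (sc γ T) (L * t₀) := by
    apply hloc.isGeod
    rw [sc_pt0, sc_pt1, hp, hTq, hd]
  have hconj : ENNReal.ofReal (L * t₀) < conjSpace X := by
    rw [← hd, ← edist_dist]; exact hlt.trans h1
  obtain ⟨ε, hε, hinj⟩ := nonconj hloc (by rw [sc_pt0, hp]) hconj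
  have hTG : sc γ T ∈ Geo p L := by
    refine hg.mem_Geo (by rw [sc_pt0, hp]) ?_
    rw [sc_pt1, hTq, hd]; nlinarith [ht₀.2]
  -- points beyond `t₀`
  let t : ℕ → ℝ := fun n => t₀ + (1 - t₀) * (1 / ((n : ℝ) + 1))
  have ht : ∀ n, t n ∈ Ioc t₀ 1 := by
    intro n
    have a : 0 < 1 / ((n : ℝ) + 1) := by positivity
    have b : 1 / ((n : ℝ) + 1) ≤ 1 := by
      rw [div_le_one (by positivity)]; linarith [(Nat.cast_nonneg n : (0:ℝ) ≤ n)]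
    have c : 0 < 1 - t₀ := by linarith [ht₀.2]
    constructor <;> simp only [t] <;> nlinarith
  let u : ℕ → I01 := fun n => ⟨t n, (ht₀.1.trans (ht n).1).le, (ht n).2⟩
  have hu : Tendsto u atTop (𝓝 T) := by
    rw [tendsto_subtype_rng]
    have : Tendsto t atTop (𝓝 (t₀ + (1 - t₀) * 0)) :=
      (tendsto_one_div_add_atTop_nhds_zero_nat.const_mul _).const_add _
    simpa using this
  have hdist : ∀ n, dist p (γ (u n)) ≤ L := by
    intro n
    have a := hγ.lip pt0 (u n) (u n).2.1
    have e0 : ((pt0 : I01) : ℝ) = 0 := rfl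
    rw [hp, e0] at a
    have := (u n).2.2
    nlinarith
  choose σ hσ hσ1 using fun n => exists_geo hgeo p (γ (u n)) (hdist n)
  obtain ⟨τ, hτ, φ, hφ, hlim⟩ := (Geo.isCompact p L).tendsto_subseq hσ
  have huφ := hu.comp hφ.tendsto_atTop
  have hτ1 : τ pt1 = q := by
    have a : Tendsto (fun n => (σ (φ n)) pt1) atTop (𝓝 (τ pt1)) :=
      ((continuous_ev pt1).tendsto τ).comp hlim
    have b : Tendsto (fun n => γ (u (φ n))) atTop (𝓝 (γ T)) := (γ.continuous.tendsto T).comp huφ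
    simp only [hσ1] at a
    rw [tendsto_nhds_unique a b, hTq]
  have hτeq : τ = sc γ T := by
    refine geo_unique hτ hTG ?_ ?_
    · rw [hτ1, sc_pt1, hTq]
    · rw [hτ1]; exact hlt
  have hsc : Tendsto (fun n => sc γ (u (φ n))) atTop (𝓝 (sc γ T)) :=
    ((sc γ).continuous.tendsto T).comp huφ
  rw [hτeq] at hlim
  have e1 := (Metric.tendsto_nhds.1 hlim) ε hε
  have e2 := (Metric.tendsto_nhds.1 hsc) ε hε
  obtain ⟨n, hn1, hn2⟩ := (e1.and e2).exists
  have hl2 : IsLocGeod (sc γ (u (φ n))) (L * t (φ n)) := hγ.sc (u (φ n))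
  have heq : σ (φ n) = sc γ (u (φ n)) := by
    refine hinj _ (Geo.mem_loc (hσ _)) _ (hl2.mem (by rw [sc_pt0, hp])) hn1 hn2 ?_
    rw [hσ1, sc_pt1]
  have hl1 := (Geo.isGeod (hσ (φ n))).loc
  rw [heq] at hl1
  have := hl1.unique hl2
  rw [sc_pt1] at this
  exact hnot _ (ht (φ n)) this

/-! ### `minRad ≤ inj` -/

/-- The injectivity radius is attained. -/
lemma inj_attained [ProperSpace X] (p : X) (h1 : inj p < conjSpace X) :
    ∃ (γ σ : C(I01, X)), γ ∈ Geo p (inj p).toReal ∧ σ ∈ Geo p (inj p).toReal ∧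
      γ pt1 = σ pt1 ∧ dist p (γ pt1) = (inj p).toReal ∧ γ ≠ σ := by
  have hfin : inj p ≠ ∞ := (lt_of_lt_of_le h1 le_top).ne
  set r := (inj p).toReal with hr
  have hofr : ENNReal.ofReal r = inj p := ENNReal.ofReal_toReal hfin
  have hr0 : 0 ≤ r := ENNReal.toReal_nonneg
  have hex : ∀ n : ℕ, ∃ q ∈ Cut p, dist p q < r + 1 / ((n : ℝ) + 1) := by
    intro n
    have hpos : 0 < 1 / ((n : ℝ) + 1) := by positivity
    have : inj p < ENNReal.ofReal (r + 1 / ((n : ℝ) + 1)) := by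
      rw [← hofr]; exact (ENNReal.ofReal_lt_ofReal_iff (by positivity)).2 (by linarith)
    unfold inj at this
    simp only [iInf_lt_iff] at this
    obtain ⟨q, hq, hlt⟩ := this
    refine ⟨q, hq, ?_⟩
    rw [edist_dist] at hlt
    exact (ENNReal.ofReal_lt_ofReal_iff (by positivity)).1 hlt
  have hlow : ∀ q ∈ Cut p, r ≤ dist p q := by
    intro q hq
    have : inj p ≤ edist p q := iInf₂_le q hq
    rw [← hofr, edist_dist] at this
    exact (ENNReal.ofReal_le_ofReal_iff dist_nonneg).1 this
  choose q hq hqd using hex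
  have hle1 : ∀ n : ℕ, dist p (q n) ≤ r + 1 := by
    intro n
    have b : 1 / ((n : ℝ) + 1) ≤ 1 := by
      rw [div_le_one (by positivity)]; linarith [(Nat.cast_nonneg n : (0:ℝ) ≤ n)]
    linarith [hqd n]
  have hpair : ∀ n, ∃ a b : C(I01, X), a ∈ Geo p (r + 1) ∧ b ∈ Geo p (r + 1) ∧
      a pt1 = q n ∧ b pt1 = q n ∧ a ≠ b := by
    intro n
    obtain ⟨a, b, La, Lb, ha, hb, a0, a1, b0, b1, hab⟩ := hq n
    exact ⟨a, b, ha.mem_Geo a0 (a1 ▸ hle1 n), hb.mem_Geo b0 (b1 ▸ hle1 n), a1, b1, hab⟩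
  choose a b ha hb ha1 hb1 hab using hpair
  obtain ⟨⟨γ, σ⟩, ⟨hγ, hσ⟩, φ, hφ, hlim⟩ :=
    ((Geo.isCompact p (r + 1)).prod (Geo.isCompact p (r + 1))).tendsto_subseq
      (x := fun n => (a n, b n)) (fun n => ⟨ha n, hb n⟩)
  have la : Tendsto (fun n => a (φ n)) atTop (𝓝 γ) := (continuous_fst.tendsto _).comp hlim
  have lb : Tendsto (fun n => b (φ n)) atTop (𝓝 σ) := (continuous_snd.tendsto _).comp hlim
  have la1 : Tendsto (fun n => q (φ n)) atTop (𝓝 (γ pt1)) := by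
    have := ((continuous_ev pt1).tendsto γ).comp la
    simpa [Function.comp_def, ha1] using this
  have lb1 : Tendsto (fun n => q (φ n)) atTop (𝓝 (σ pt1)) := by
    have := ((continuous_ev pt1).tendsto σ).comp lb
    simpa [Function.comp_def, hb1] using this
  have hend : γ pt1 = σ pt1 := tendsto_nhds_unique la1 lb1
  have hd : dist p (γ pt1) = r := by
    have t1 : Tendsto (fun n => dist p (q (φ n))) atTop (𝓝 (dist p (γ pt1))) :=
      tendsto_const_nhds.dist la1
    have t2 : Tendsto (fun n : ℕ => dist p (q n)) atTop (𝓝 r) := by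
      have u : Tendsto (fun n : ℕ => r + 1 / ((n : ℝ) + 1)) atTop (𝓝 (r + 0)) :=
        tendsto_one_div_add_atTop_nhds_zero_nat.const_add _
      rw [add_zero] at u
      exact tendsto_of_tendsto_of_tendsto_of_le_of_le tendsto_const_nhds u
        (fun n => hlow _ (hq n)) (fun n => (hqd n).le)
    exact tendsto_nhds_unique t1 (t2.comp hφ.tendsto_atTop)
  refine ⟨γ, σ, ⟨hγ.1, hd.le, hγ.2.2⟩, ⟨hσ.1, by rw [← hend]; exact hd.le, hσ.2.2⟩, hend, hd, ?_⟩
  intro heq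
  have heq' : γ = σ := heq
  rw [← heq'] at lb
  obtain ⟨ε, hε, hinj⟩ := nonconj (Geo.isGeod hγ).loc hγ.1 (by rw [hd, hofr]; exact h1)
  obtain ⟨n, hn1, hn2⟩ :=
    ((Metric.tendsto_nhds.1 la ε hε).and (Metric.tendsto_nhds.1 lb ε hε)).exists
  exact hab (φ n) (hinj _ (Geo.mem_loc (ha _)) _ (Geo.mem_loc (hb _)) hn1 hn2
    ((ha1 _).trans (hb1 _).symm))

/-- Inside the injectivity radius geodesics depend continuously on the endpoint. -/
lemma geo_continuous [ProperSpace X] {p : X} {R : ℝ} (z : I01 → X) (hz : Continuous z)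
    (hlt : ∀ u, edist p (z u) < inj p) (τ : I01 → C(I01, X)) (hτ : ∀ u, τ u ∈ Geo p R)
    (hτ1 : ∀ u, τ u pt1 = z u) : Continuous τ := by
  rw [continuous_iff_continuousAt]
  intro u
  refine (Geo.isCompact p R).tendsto_nhds_of_unique_mapClusterPt
    (Eventually.of_forall hτ) fun c hc hcl => ?_
  have h1 : MapClusterPt (c pt1) (𝓝 u) (fun v => τ v pt1) :=
    hcl.continuousAt_comp (f := fun c : C(I01, X) => c pt1) (continuous_ev pt1).continuousAt
  simp only [hτ1] at h1
  have h2 : c pt1 = z u := by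
    have : ClusterPt (c pt1) (𝓝 (z u)) := h1.clusterPt.mono (hz.tendsto u)
    exact eq_of_nhds_neBot this
  exact geo_unique hc (hτ u) (by rw [h2, hτ1]) (by rw [h2]; exact hlt u)

/-- Two geodesics from `p` to `q` forming a geodesic loop give a minimal cut point. -/
lemma mem_minCut {p q : X} {r s : ℝ} (hr : 0 < r) {γ σ : C(I01, X)} (hγ : IsGeod γ r)
    (hσ : IsGeod σ r) (hγ0 : γ pt0 = p) (hσ0 : σ pt0 = p) (hγ1 : γ pt1 = q) (hσ1 : σ pt1 = q)
    (hs : 0 < s) (hs1 : 1 - s ∈ I01)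
    (hd : 2 * r * s ≤ dist (γ ⟨1 - s, hs1⟩) (σ ⟨1 - s, hs1⟩)) : q ∈ MinCut p := by
  let g : ℝ → X := fun t => γ (Set.projIcc 0 1 zero_le_one (2 * t))
  let k : ℝ → X := fun t => σ (Set.projIcc 0 1 zero_le_one (2 - 2 * t))
  let f : ℝ → X := fun t => if t ≤ 1 / 2 then g t else k t
  have hf : Continuous f := by
    refine Continuous.if_le ?_ ?_ continuous_id continuous_const ?_
    · exact γ.continuous.comp (continuous_projIcc.comp (by fun_prop))
    · exact σ.continuous.comp (continuous_projIcc.comp (by fun_prop))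
    · intro t ht
      have ht : t = 1 / 2 := ht
      subst ht
      have e1 : Set.projIcc (0 : ℝ) 1 zero_le_one (2 * (1 / 2)) = pt1 := by
        rw [Set.projIcc_of_mem _ (by norm_num)]; ext; simp [pt1]
      have e2 : Set.projIcc (0 : ℝ) 1 zero_le_one (2 - 2 * (1 / 2)) = pt1 := by
        rw [Set.projIcc_of_mem _ (by norm_num)]; ext; simp [pt1]; norm_num
      simp only [g, k, e1, e2, hγ1, hσ1]
  let δ : C(I01, X) := ⟨fun t => f t, hf.comp continuous_subtype_val⟩
  have hδ1 : ∀ (t : I01) (_ : (t : ℝ) ≤ 1 / 2),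
      ∃ a : I01, (a : ℝ) = 2 * t ∧ δ t = γ a := by
    intro t ht
    have hm : 2 * (t : ℝ) ∈ I01 := ⟨by linarith [t.2.1], by linarith⟩
    refine ⟨⟨_, hm⟩, rfl, ?_⟩
    show f t = _
    simp only [f, if_pos ht, g]
    rw [Set.projIcc_of_mem _ hm]
  have hδ2 : ∀ (t : I01) (_ : 1 / 2 < (t : ℝ)),
      ∃ a : I01, (a : ℝ) = 2 - 2 * t ∧ δ t = σ a := by
    intro t ht
    have hm : 2 - 2 * (t : ℝ) ∈ I01 := ⟨by linarith [t.2.2], by linarith⟩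
    refine ⟨⟨_, hm⟩, rfl, ?_⟩
    show f t = _
    simp only [f, if_neg (not_le.2 ht), k]
    rw [Set.projIcc_of_mem _ hm]
  have d11 : ∀ t t' : I01, (t : ℝ) ≤ 1 / 2 → (t' : ℝ) ≤ 1 / 2 →
      dist (δ t) (δ t') = 2 * r * |(t : ℝ) - t'| := by
    intro t t' ht ht'
    obtain ⟨a, ha, ha'⟩ := hδ1 t ht
    obtain ⟨b, hb, hb'⟩ := hδ1 t' ht'
    rw [ha', hb', hγ.2, ha, hb, ← mul_sub, abs_mul, abs_two]; ring
  have d22 : ∀ t t' : I01, 1 / 2 < (t : ℝ) → 1 / 2 < (t' : ℝ) →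
      dist (δ t) (δ t') = 2 * r * |(t : ℝ) - t'| := by
    intro t t' ht ht'
    obtain ⟨a, ha, ha'⟩ := hδ2 t ht
    obtain ⟨b, hb, hb'⟩ := hδ2 t' ht'
    rw [ha', hb', hσ.2, ha, hb, show 2 - 2 * (t : ℝ) - (2 - 2 * t') = 2 * (t' - t) by ring,
      abs_mul, abs_two, abs_sub_comm]; ring
  have e1 : ((pt1 : I01) : ℝ) = 1 := rfl
  have e0 : ((pt0 : I01) : ℝ) = 0 := rfl
  -- near the middle
  have d12 : ∀ t t' : I01, (t : ℝ) ≤ 1 / 2 → 1 / 2 < (t' : ℝ) → |(t : ℝ) - 1 / 2| < s / 2 →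
      |(t' : ℝ) - 1 / 2| < s / 2 → dist (δ t) (δ t') = 2 * r * |(t : ℝ) - t'| := by
    intro t t' ht ht' hts hts'
    obtain ⟨a, ha, ha'⟩ := hδ1 t ht
    obtain ⟨b, hb, hb'⟩ := hδ2 t' ht'
    rw [abs_lt] at hts hts'
    have u1 : dist (γ a) q = r * (1 - a) := by
      rw [← hγ1, hγ.2, e1, abs_sub_comm, abs_of_nonneg (by linarith [a.2.2])]
    have u2 : dist q (σ b) = r * (1 - b) := by
      rw [← hσ1, hσ.2, e1, abs_of_nonneg (by linarith [b.2.2])]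
    have u3 := dist_triangle (γ a) q (σ b)
    have u4 : dist (γ ⟨1 - s, hs1⟩) (γ a) = r * (a - (1 - s)) := by
      rw [hγ.2, abs_sub_comm, abs_of_nonneg (by simp only; linarith)]
    have u5 : dist (σ b) (σ ⟨1 - s, hs1⟩) = r * (b - (1 - s)) := by
      rw [hσ.2, abs_of_nonneg (by simp only; linarith)]
    have u6 := dist_triangle4 (γ ⟨1 - s, hs1⟩) (γ a) (σ b) (σ ⟨1 - s, hs1⟩)
    rw [ha', hb', abs_sub_comm, abs_of_nonneg (by linarith)]
    rw [ha] at u1 u4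
    rw [hb] at u2 u5
    apply le_antisymm <;> nlinarith
  have hhalf : (1 / 2 : ℝ) ∈ Set.Ioo (0 : ℝ) 1 := by norm_num
  have hδ0 : δ pt0 = p := by
    obtain ⟨a, ha, ha'⟩ := hδ1 pt0 (by rw [e0]; norm_num)
    rw [ha', ← hγ0]; congr 1; ext; rw [ha, e0]; norm_num
  have hpq : dist p q = r := by
    rw [← hγ0, ← hγ1, hγ.2, e0, e1]; norm_num
  refine ⟨δ, 2 * r, 1 / 2, hhalf, ⟨by linarith, fun t => ?_⟩, by linarith, hδ0, ?_, ?_, ?_⟩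
  · rcases lt_trichotomy (t : ℝ) (1 / 2) with h | h | h
    · refine ⟨1 / 2 - t, by linarith, fun a b ha hb => ?_⟩
      rw [abs_lt] at ha hb
      exact d11 a b (by linarith) (by linarith)
    · refine ⟨s / 2, by linarith, fun a b ha hb => ?_⟩
      rw [h] at ha hb
      rcases le_or_gt (a : ℝ) (1 / 2) with h1 | h1 <;> rcases le_or_gt (b : ℝ) (1 / 2) with h2 | h2
      · exact d11 a b h1 h2
      · exact d12 a b h1 h2 ha hb
      · rw [dist_comm, abs_sub_comm]; exact d12 b a h2 h1 hb ha
      · exact d22 a b h1 h2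
    · refine ⟨t - 1 / 2, by linarith, fun a b ha hb => ?_⟩
      rw [abs_lt] at ha hb
      exact d22 a b (by linarith) (by linarith)
  · obtain ⟨a, ha, ha'⟩ := hδ1 ⟨1 / 2, Set.mem_Icc_of_Ioo hhalf⟩ le_rfl
    rw [ha', ← hγ1]; congr 1; ext; rw [ha, e1]; norm_num
  · rw [hpq]; ring
  · intro t ht
    obtain ⟨a, ha, ha'⟩ := hδ2 ⟨t, ⟨(hhalf.1.trans ht.1).le, ht.2⟩⟩ ht.1
    simp only at ha
    rw [ha', ← hσ0, hσ.2, e0, zero_sub, abs_neg, abs_of_nonneg a.2.1, ha]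
    intro hcon
    have := ht.1
    nlinarith

lemma minRad_le_inj [ProperSpace X] (hgeo : GeodesicSpace X) (p : X)
    (h0 : 0 < inj p) (h1 : inj p < conjSpace X) : minRad p ≤ inj p := by
  have hfin : inj p ≠ ∞ := (lt_of_lt_of_le h1 le_top).ne
  obtain ⟨γ, σ, hγ, hσ, hend, hd, hne⟩ := inj_attained p h1
  have hofr : ENNReal.ofReal (inj p).toReal = inj p := ENNReal.ofReal_toReal hfin
  have hr : 0 < (inj p).toReal := ENNReal.toReal_pos h0.ne' hfin
  generalize (inj p).toReal = r at *
  have hlt_iff : ∀ x : X, dist p x < r → edist p x < inj p := by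
    intro x hx
    rw [← hofr, edist_dist]
    exact (ENNReal.ofReal_lt_ofReal_iff hr).2 hx
  have gγ : IsGeod γ r := hd ▸ Geo.isGeod hγ
  have gσ : IsGeod σ r := by
    have := Geo.isGeod hσ
    rwa [← hend, hd] at this
  suffices hmin : γ pt1 ∈ MinCut p by
    refine (iInf₂_le (γ pt1) hmin).trans ?_
    rw [edist_dist, hd, hofr]
  by_contra hnm
  have hshort : ∀ (s : ℝ) (_ : 0 < s) (hs1 : 1 - s ∈ I01),
      dist (γ ⟨1 - s, hs1⟩) (σ ⟨1 - s, hs1⟩) < 2 * r * s := by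
    intro s hs hs1
    by_contra! hcon
    exact hnm (mem_minCut hr gγ gσ hγ.1 hσ.1 rfl hend.symm hs hs1 hcon)
  obtain ⟨ε, hε, hinj⟩ := nonconj gγ.loc hγ.1 (by rw [hofr]; exact h1)
  have hσγ : ε ≤ dist σ γ := by
    by_contra! hcon
    exact hne (hinj _ (Geo.mem_loc hγ) _ (Geo.mem_loc hσ) (by simpa using hε) hcon hend)
  have e1 : ((pt1 : I01) : ℝ) = 1 := rfl
  have e0 : ((pt0 : I01) : ℝ) = 0 := rfl
  -- geodesics ending near `q` at distance `ε / 2` from `γ`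
  have hmain : ∀ η : ℝ, 0 < η → ∃ c ∈ Geo p r, dist c γ = ε / 2 ∧ dist (c pt1) (γ pt1) < η := by
    intro η hη
    have tγ : Tendsto (fun T : I01 => dist (sc γ T) γ) (𝓝 pt1) (𝓝 0) := by
      have : Continuous fun T : I01 => dist (sc γ T) γ := by fun_prop
      simpa [sc_one] using this.tendsto pt1
    have tσ : Tendsto (fun T : I01 => dist (sc σ T) γ) (𝓝 pt1) (𝓝 (dist σ γ)) := by
      have : Continuous fun T : I01 => dist (sc σ T) γ := by fun_prop
      simpa [sc_one] using this.tendsto pt1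
    have A := (tγ.eventually_lt_const (half_pos hε)).and
      (tσ.eventually_const_lt (lt_of_lt_of_le (half_lt_self hε) hσγ))
    obtain ⟨ρ, hρ, hball⟩ := Metric.eventually_nhds_iff.1 A
    obtain ⟨s, hs0, hs⟩ : ∃ s : ℝ, 0 < s ∧ s < min (min ρ 1) (η / (3 * r)) :=
      exists_between (by positivity)
    have hsρ : s < ρ := hs.trans_le ((min_le_left _ _).trans (min_le_left _ _))
    have hs1 : s < 1 := hs.trans_le ((min_le_left _ _).trans (min_le_right _ _))
    have hsη : 3 * r * s < η := by
      have := hs.trans_le (min_le_right _ _)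
      rw [lt_div_iff₀ (by positivity)] at this
      linarith
    have hT : 1 - s ∈ I01 := ⟨by linarith, by linarith⟩
    obtain ⟨hb1, hb2⟩ := @hball ⟨1 - s, hT⟩ (by
      rw [Subtype.dist_eq, Real.dist_eq, e1]
      simp only [sub_sub_cancel_left, abs_neg, abs_of_pos hs0, hsρ])
    have hsh := hshort s hs0 hT
    set T : I01 := ⟨1 - s, hT⟩ with hTdef
    have hTv : (T : ℝ) = 1 - s := rfl
    obtain ⟨e, ℓ, he, he0, he1⟩ := hgeo (γ T) (σ T)
    have hℓ : ℓ = dist (γ T) (σ T) := by rw [he.len, he0, he1]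
    have dγ : dist p (γ T) = r * (1 - s) := by
      rw [← hγ.1, gγ.2, e0, zero_sub, abs_neg, abs_of_nonneg T.2.1]
    have dσ : dist p (σ T) = r * (1 - s) := by
      rw [← hσ.1, gσ.2, e0, zero_sub, abs_neg, abs_of_nonneg T.2.1]
    have deγ : ∀ u : I01, dist (γ T) (e u) = ℓ * u := by
      intro u
      rw [← he0, he.2, e0, zero_sub, abs_neg, abs_of_nonneg u.2.1]
    have deσ : ∀ u : I01, dist (σ T) (e u) = ℓ * (1 - u) := by
      intro u
      rw [← he1, he.2, e1, abs_of_nonneg (by linarith [u.2.2])]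
    have hin : ∀ u : I01, dist p (e u) < r := by
      intro u
      have a := dist_triangle p (γ T) (e u)
      have b := dist_triangle p (σ T) (e u)
      rw [dγ, deγ] at a
      rw [dσ, deσ] at b
      linarith
    choose τ hτ hτ1 using fun u => exists_geo hgeo p (e u) (hin u).le
    have hτc : Continuous τ :=
      geo_continuous (fun u => e u) e.continuous (fun u => hlt_iff _ (hin u)) τ hτ hτ1
    have hrs : r * (1 - s) < r := by nlinarith
    have hτ0 : τ pt0 = sc γ T := by
      refine geo_unique (hτ _) (R' := r) ((gγ.sc T).mem_Geo (by rw [sc_pt0, hγ.1]) ?_) ?_ ?_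
      · rw [sc_pt1, dγ]; exact hrs.le
      · rw [hτ1, he0, sc_pt1]
      · rw [hτ1]; exact hlt_iff _ (hin _)
    have hτ1' : τ pt1 = sc σ T := by
      refine geo_unique (hτ _) (R' := r) ((gσ.sc T).mem_Geo (by rw [sc_pt0, hσ.1]) ?_) ?_ ?_
      · rw [sc_pt1, dσ]; exact hrs.le
      · rw [hτ1, he1, sc_pt1]
      · rw [hτ1]; exact hlt_iff _ (hin _)
    have hivt : ε / 2 ∈ Set.range fun u : I01 => dist (τ u) γ := by
      have hc : Continuous fun u : I01 => dist (τ u) γ := hτc.dist continuous_const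
      refine mem_range_of_exists_le_of_exists_ge hc ⟨pt0, ?_⟩ ⟨pt1, ?_⟩
      · rw [hτ0]; exact hb1.le
      · rw [hτ1']; exact hb2.le
    obtain ⟨u, hu⟩ := hivt
    refine ⟨τ u, hτ u, hu, ?_⟩
    rw [hτ1]
    have a := dist_triangle_left (e u) (γ pt1) (γ T)
    rw [deγ, gγ.2, e1, hTv, abs_sub_comm, abs_of_nonneg (by linarith)] at a
    have hu1 := u.2.2
    have hℓ0 := he.1
    nlinarith
  choose c hc hcd hc1 using fun n : ℕ => hmain (1 / ((n : ℝ) + 1)) (by positivity)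
  obtain ⟨τ, hτ, φ, hφ, hlim⟩ := (Geo.isCompact p r).tendsto_subseq hc
  have t1 : dist τ γ = ε / 2 := by
    have a : Tendsto (fun n => dist (c (φ n)) γ) atTop (𝓝 (dist τ γ)) :=
      hlim.dist tendsto_const_nhds
    simp only [hcd] at a
    exact tendsto_nhds_unique a tendsto_const_nhds |>.symm ▸ rfl
  have t2 : τ pt1 = γ pt1 := by
    have a : Tendsto (fun n => (c (φ n)) pt1) atTop (𝓝 (τ pt1)) :=
      ((continuous_ev pt1).tendsto τ).comp hlim
    have b : Tendsto (fun n => (c n) pt1) atTop (𝓝 (γ pt1)) := by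
      rw [tendsto_iff_dist_tendsto_zero]
      exact squeeze_zero (fun _ => dist_nonneg) (fun n => (hc1 n).le)
        tendsto_one_div_add_atTop_nhds_zero_nat
    exact tendsto_nhds_unique a (b.comp hφ.tendsto_atTop)
  have t3 : τ = γ := hinj _ (Geo.mem_loc hτ) _ (Geo.mem_loc hγ) (by rw [t1]; linarith)
    (by simpa using hε) t2
  rw [t3, dist_self] at t1
  linarith

/-- In a proper geodesic metric space, if `0 < inj p < conj X`, then
`inj p = MinRad p`. -/
theorem inj_eq_minRad {X : Type*} [MetricSpace X] [ProperSpace X]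
    (hgeo : GeodesicSpace X) (p : X)
    (h0 : 0 < inj p) (h1 : inj p < conjSpace X) :
    inj p = minRad p := by
  exact le_antisymm (inj_le_minRad hgeo p h1) (minRad_le_inj hgeo p h0 h1)

end InjSoul
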